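/- Fix $\rho \in (0,1)$, $q > 0$, $0 < \gamma < \frac{1}{1-\rho}$, and $d = d(n) \ge n$. For each $n$, let $x_1,\dots,x_n \in \mathbb{R}^d$ with $\|x_i\|^2 = q$ and pairwise cosine similarity $\rho$, and let $X' = \mathcal{ATT}(\mathcal{N}(X))$ with $\beta = \gamma\log n$. Then $\frac{1}{nd}\|\nabla_X X'\|_F^2 \to 0$ as $n \to \infty$. -/

import Mathlib

open scoped RealInnerProductSpace BigOperators

/-!
Write `y i` for the normalized tokens and `w j i` for the attention weights. The `(j, i)` block of
the Jacobian of attention is `w j i • 1`, plus a rank-one operator of size `O(β * w j i)`, plus, on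
the diagonal only, `β` times the covariance operator of the `y m` under the weights `w j`, whose
Hilbert-Schmidt norm is bounded independently of the dimension. Only the first term sees the
dimension `d`, and `∑ i, w j i ^ 2 * d ≤ d * max w`, so the squared Frobenius norm is
`O(n * (d * max w + β ^ 2))`. As the scores `β * ⟪y j, y i⟫` oscillate by at most `|β| * (1 - ρ)`,
the weights are at most `exp (|β| * (1 - ρ)) / n = n ^ (|γ| * (1 - ρ) - 1)`, which tends to `0`
exactly in the subcritical regime.
-/

section Normalization

variable {E : Type*} [NormedAddCommGroup E]

lemma ne_zero_of_le_norm_sq {q : ℝ} (hq : 0 < q) {x : E} (hx : q ≤ ‖x‖ ^ 2) : x ≠ 0 := by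
  rintro rfl
  simpa using hq.trans_le hx

variable [InnerProductSpace ℝ E]

lemma hasFDerivAt_normalize {x : E} (hx : x ≠ 0) :
    HasFDerivAt NormedSpace.normalize (‖x‖⁻¹ • (ℝ ∙ x)ᗮ.starProjection) x := by
  have hx' : ‖x‖ ≠ 0 := norm_ne_zero_iff.2 hx
  have hnorm : HasFDerivAt (fun y : E ↦ ‖y‖) (‖x‖⁻¹ • innerSL ℝ x) x := by
    have hsqrt := (hasStrictFDerivAt_norm_sq x).hasFDerivAt.sqrt (pow_ne_zero 2 hx')
    simp only [Real.sqrt_sq (norm_nonneg _)] at hsqrt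
    refine hsqrt.congr_fderiv ?_
    ext v
    simp only [one_div, mul_inv_rev, smul_apply, coe_innerSL_apply, nsmul_eq_mul, Nat.cast_ofNat,
      smul_eq_mul]
    field_simp
  refine (((hasDerivAt_inv hx').comp_hasFDerivAt x hnorm).smul (hasFDerivAt_id x)).congr_fderiv
    (ContinuousLinearMap.ext fun v ↦ ?_)
  simp only [Submodule.starProjection_orthogonal_val, Submodule.starProjection_singleton,
    Function.comp_apply, id, add_apply, smul_apply, ContinuousLinearMap.smulRight_apply,
    ContinuousLinearMap.id_apply, innerSL_apply_apply, RCLike.ofReal_real_eq_id, smul_eq_mul]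
  match_scalars <;> field_simp

lemma norm_fderiv_normalize_le {x : E} (hx : x ≠ 0) :
    ‖fderiv ℝ NormedSpace.normalize x‖ ≤ ‖x‖⁻¹ := by
  rw [(hasFDerivAt_normalize hx).fderiv, norm_smul, norm_inv, norm_norm]
  exact mul_le_of_le_one_right (by positivity) (Submodule.starProjection_norm_le _)

lemma le_inner_of_pairwise_le_inner {ι : Type*} [Nontrivial ι] {ρ : ℝ} {Y : ι → E}
    (hY : ∀ m, ‖Y m‖ = 1) (h : ∀ i j, i ≠ j → ρ ≤ ⟪Y i, Y j⟫) (i j : ι) : ρ ≤ ⟪Y i, Y j⟫ := by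
  rcases eq_or_ne i j with rfl | hij
  · obtain ⟨j, hj⟩ := exists_ne i
    calc ρ ≤ ⟪Y i, Y j⟫ := h i j hj.symm
      _ ≤ ‖Y i‖ * ‖Y j‖ := real_inner_le_norm _ _
      _ = ⟪Y i, Y i⟫ := by rw [real_inner_self_eq_norm_mul_norm, hY, hY]
  · exact h i j hij

end Normalization

section WeightedSums

variable {ι : Type*}

lemma sum_mul_sub_smul_eq [Fintype ι] {R M : Type*} [CommRing R] [AddCommGroup M] [Module R M]
    (w c : ι → R) (y : ι → M) :
    ∑ m, (w m * (c m - ∑ l, w l * c l)) • y m = ∑ m, (w m * c m) • (y m - ∑ l, w l • y l) := by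
  simp only [mul_sub, sub_smul, smul_sub, Finset.sum_sub_distrib, ← Finset.sum_smul,
    mul_comm (w _) (∑ l, w l * c l), mul_smul (∑ l, w l * c l), ← Finset.smul_sum]

variable {E : Type*} [SeminormedAddCommGroup E]

lemma norm_sq_add₃_le (x y z : E) : ‖x + y + z‖ ^ 2 ≤ 3 * (‖x‖ ^ 2 + ‖y‖ ^ 2 + ‖z‖ ^ 2) :=
  calc ‖x + y + z‖ ^ 2 ≤ (‖x‖ + ‖y‖ + ‖z‖) ^ 2 := by gcongr; exact norm_add₃_le
    _ ≤ 3 * (‖x‖ ^ 2 + ‖y‖ ^ 2 + ‖z‖ ^ 2) := by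
      simpa [Fin.sum_univ_three] using
        sq_sum_le_card_mul_sum_sq (s := Finset.univ) (f := ![‖x‖, ‖y‖, ‖z‖])

lemma norm_sq_sum_smul_le [Fintype ι] [NormedSpace ℝ E] {w : ι → ℝ} (hw : ∀ m, 0 ≤ w m)
    (hw1 : ∑ m, w m = 1) (z : ι → E) : ‖∑ m, w m • z m‖ ^ 2 ≤ ∑ m, w m * ‖z m‖ ^ 2 :=
  (convexOn_univ_norm.pow (fun _ _ ↦ norm_nonneg _) 2).map_sum_le (fun m _ ↦ hw m) hw1
    fun _ _ ↦ Set.mem_univ _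

end WeightedSums

section HilbertSchmidt

variable {κ F : Type*} [Fintype κ] [NormedAddCommGroup F] [InnerProductSpace ℝ F]

lemma sum_norm_sq_apply_le {E : Type*} [SeminormedAddCommGroup E] [NormedSpace ℝ E]
    (b : OrthonormalBasis κ ℝ F) (L : F →L[ℝ] E) :
    ∑ u, ‖L (b u)‖ ^ 2 ≤ Fintype.card κ * ‖L‖ ^ 2 :=
  calc ∑ u, ‖L (b u)‖ ^ 2 ≤ ∑ _u : κ, ‖L‖ ^ 2 := by
        gcongr with u
        simpa using L.le_opNorm (b u)
    _ = Fintype.card κ * ‖L‖ ^ 2 := by rw [Finset.sum_const, Finset.card_univ, nsmul_eq_mul]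

lemma sum_inner_apply_sq_le {E : Type*} [NormedAddCommGroup E] [InnerProductSpace ℝ E]
    (b : OrthonormalBasis κ ℝ F) (L : F →L[ℝ] E) (y : E) :
    ∑ u, ⟪y, L (b u)⟫ ^ 2 ≤ ‖y‖ ^ 2 * ‖L‖ ^ 2 :=
  calc ∑ u, ⟪y, L (b u)⟫ ^ 2 = ‖(innerSL ℝ y).comp L‖ ^ 2 :=
        (b.norm_dual ((innerSL ℝ y).comp L)).symm
    _ ≤ (‖innerSL ℝ y‖ * ‖L‖) ^ 2 := by
        gcongr; exact ContinuousLinearMap.opNorm_comp_le _ _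
    _ = ‖y‖ ^ 2 * ‖L‖ ^ 2 := by rw [innerSL_apply_norm, mul_pow]

end HilbertSchmidt

section Softmax

variable {ι : Type*} [Fintype ι]

/-- The softmax of a finite family of scores: the probability weights proportional to their
exponentials. -/
noncomputable def softmax (z : ι → ℝ) (i : ι) : ℝ :=
  Real.exp (z i) / ∑ l, Real.exp (z l)

lemma softmax_nonneg (z : ι → ℝ) (i : ι) : 0 ≤ softmax z i := by
  unfold softmax; positivity

variable [Nonempty ι]

lemma sum_exp_pos (z : ι → ℝ) : 0 < ∑ l, Real.exp (z l) :=
  Finset.sum_pos (fun _ _ ↦ Real.exp_pos _) Finset.univ_nonempty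

lemma sum_softmax (z : ι → ℝ) : ∑ i, softmax z i = 1 := by
  simp only [softmax, ← Finset.sum_div]
  exact div_self (sum_exp_pos z).ne'

lemma softmax_le_one (z : ι → ℝ) (i : ι) : softmax z i ≤ 1 :=
  sum_softmax z ▸ Finset.single_le_sum (fun l _ ↦ softmax_nonneg z l) (Finset.mem_univ i)

lemma softmax_le_exp_div_card {z : ι → ℝ} {i : ι} {c : ℝ} (h : ∀ l, z i - z l ≤ c) :
    softmax z i ≤ Real.exp c / Fintype.card ι := by
  rw [softmax, div_le_div_iff₀ (sum_exp_pos z) (Nat.cast_pos.2 Fintype.card_pos)]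
  calc Real.exp (z i) * Fintype.card ι = ∑ _l : ι, Real.exp (z i) := by
        rw [Finset.sum_const, Finset.card_univ, nsmul_eq_mul, mul_comm]
    _ ≤ ∑ l, Real.exp c * Real.exp (z l) := by
        gcongr with l
        rw [← Real.exp_add, Real.exp_le_exp]
        linarith [h l]
    _ = Real.exp c * ∑ l, Real.exp (z l) := (Finset.mul_sum ..).symm

lemma hasFDerivAt_softmax (z : ι → ℝ) (i : ι) :
    HasFDerivAt (fun z ↦ softmax z i)
      (softmax z i • (ContinuousLinearMap.proj (R := ℝ) (φ := fun _ : ι ↦ ℝ) i -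
        ∑ l, softmax z l • ContinuousLinearMap.proj (R := ℝ) (φ := fun _ : ι ↦ ℝ) l)) z := by
  have softmax_eq_exp (z : ι → ℝ) :
      softmax z i = Real.exp (z i - Real.log (∑ l, Real.exp (z l))) := by
    rw [Real.exp_sub, Real.exp_log (sum_exp_pos z), softmax]
  have hlogSumExp : HasFDerivAt (fun z : ι → ℝ ↦ Real.log (∑ l, Real.exp (z l)))
      (∑ l, softmax z l • ContinuousLinearMap.proj (R := ℝ) (φ := fun _ : ι ↦ ℝ) l) z := by
    refine ((HasFDerivAt.fun_sum fun l _ ↦ (hasFDerivAt_apply l z).exp).log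
      (sum_exp_pos z).ne').congr_fderiv ?_
    simp only [softmax, Finset.smul_sum, smul_smul, inv_mul_eq_div]
  simpa only [softmax_eq_exp] using ((hasFDerivAt_apply i z).fun_sub hlogSumExp).exp

end Softmax

section Attention

variable {ι E : Type*} [Fintype ι] [NormedAddCommGroup E] [InnerProductSpace ℝ E]

/-- The weight that token `k` puts on each token: the softmax of the scores `β * ⟪Y k, Y m⟫`. -/
noncomputable def attentionWeight (β : ℝ) (Y : ι → E) (k : ι) : ι → ℝ :=
  softmax fun m ↦ β * ⟪Y k, Y m⟫

/-- The simplified self-attention layer at inverse temperature `β`, all of whose query, key and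
value matrices are the identity. It is written with its partition function in front, as in the
paper; `attention_eq_sum_attentionWeight_smul` is the form used in computations. -/
noncomputable def attention (β : ℝ) (Y : ι → E) (k : ι) : E :=
  (∑ l, Real.exp (β * ⟪Y k, Y l⟫))⁻¹ • ∑ m, Real.exp (β * ⟪Y k, Y m⟫) • Y m

/-- The attention layer applied to the normalized tokens, `𝒜𝒯𝒯 ∘ 𝒩` in the paper. -/
noncomputable def normalizedAttention (β : ℝ) (X : ι → E) : ι → E :=
  attention β fun m ↦ NormedSpace.normalize (X m)

lemma attention_eq_sum_attentionWeight_smul (β : ℝ) (Y : ι → E) (k : ι) :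
    attention β Y k = ∑ m, attentionWeight β Y k m • Y m := by
  simp only [attention, attentionWeight, softmax, Finset.smul_sum, smul_smul, inv_mul_eq_div]

lemma attentionWeight_nonneg (β : ℝ) (Y : ι → E) (k m : ι) : 0 ≤ attentionWeight β Y k m :=
  softmax_nonneg _ _

variable [Nonempty ι]

lemma sum_attentionWeight (β : ℝ) (Y : ι → E) (k : ι) : ∑ m, attentionWeight β Y k m = 1 :=
  sum_softmax _

lemma attentionWeight_le_of_inner_mem_Icc (β : ℝ) {ρ σ : ℝ} {Y : ι → E} {k : ι}
    (hY : ∀ l, ⟪Y k, Y l⟫ ∈ Set.Icc ρ σ) (m : ι) :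
    attentionWeight β Y k m ≤ Real.exp (|β| * (σ - ρ)) / Fintype.card ι := by
  refine softmax_le_exp_div_card fun l ↦ ?_
  calc β * ⟪Y k, Y m⟫ - β * ⟪Y k, Y l⟫ ≤ |β| * |⟪Y k, Y m⟫ - ⟪Y k, Y l⟫| := by
        rw [← mul_sub, ← abs_mul]
        exact le_abs_self _
    _ ≤ |β| * (σ - ρ) := by
        gcongr
        rw [abs_sub_le_iff]
        constructor <;> linarith [(hY m).1, (hY m).2, (hY l).1, (hY l).2]

section Derivative

lemma hasFDerivAt_attention (β : ℝ) (Y : ι → E) (k : ι) :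
    HasFDerivAt (fun Y : ι → E ↦ attention β Y k)
      (∑ m, attentionWeight β Y k m • (ContinuousLinearMap.proj (R := ℝ) (φ := fun _ : ι ↦ E) m +
        (β • (fderivInnerCLM ℝ (Y k, Y m)).comp
          ((ContinuousLinearMap.proj k).prod (ContinuousLinearMap.proj m))).smulRight
            (Y m - attention β Y k))) Y := by
  have hscore (m : ι) := ((hasFDerivAt_apply k Y).inner ℝ (hasFDerivAt_apply m Y)).const_mul β
  have hweight (m : ι) := (hasFDerivAt_softmax (fun m ↦ β * ⟪Y k, Y m⟫) m).comp Y
    (hasFDerivAt_pi.2 hscore)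
  have hsum := HasFDerivAt.fun_sum (u := Finset.univ) fun m _ ↦
    (hweight m).fun_smul (hasFDerivAt_apply m Y)
  simp only [attention_eq_sum_attentionWeight_smul]
  refine hsum.congr_fderiv (ContinuousLinearMap.ext fun V ↦ ?_)
  simpa [attentionWeight, Finset.sum_add_distrib, smul_smul] using
    sum_mul_sub_smul_eq (attentionWeight β Y k) (fun m ↦ β * (⟪Y k, V m⟫ + ⟪V k, Y m⟫)) Y

lemma differentiable_attention (β : ℝ) : Differentiable ℝ (attention β : (ι → E) → ι → E) :=
  fun Y ↦ differentiableAt_pi.2 fun k ↦ (hasFDerivAt_attention β Y k).differentiableAt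

lemma fderiv_attention_apply (β : ℝ) (Y V : ι → E) (k : ι) :
    fderiv ℝ (attention β) Y V k = ∑ m, attentionWeight β Y k m •
      (V m + (β * (⟪Y k, V m⟫ + ⟪V k, Y m⟫)) • (Y m - attention β Y k)) := by
  rw [(hasFDerivAt_pi.2 fun k ↦ hasFDerivAt_attention β Y k).fderiv]
  simp

variable [DecidableEq ι]

lemma fderiv_attention_single (β : ℝ) (Y : ι → E) (i j : ι) (w : E) :
    fderiv ℝ (attention β) Y (Pi.single i w) j =
      attentionWeight β Y j i • w +
      (attentionWeight β Y j i * (β * ⟪Y j, w⟫)) • (Y i - attention β Y j) +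
      ∑ m, attentionWeight β Y j m •
        ((β * ⟪(Pi.single i w : ι → E) j, Y m⟫) • (Y m - attention β Y j)) := by
  rw [fderiv_attention_apply]
  simp only [mul_add, add_smul, smul_add, Finset.sum_add_distrib, ← add_assoc]
  congr 2
  · rw [Finset.sum_eq_single i (by simp +contextual [Pi.single_eq_of_ne]) (by simp),
      Pi.single_eq_same]
  · rw [Finset.sum_eq_single i (by simp +contextual [Pi.single_eq_of_ne]) (by simp),
      Pi.single_eq_same]
    simp only [mul_smul]

lemma fderiv_normalizedAttention_single (β : ℝ) {X : ι → E} (hX : ∀ m, X m ≠ 0) (i : ι) (w : E) :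
    fderiv ℝ (normalizedAttention β) X (Pi.single i w) =
      fderiv ℝ (attention β) (fun m ↦ NormedSpace.normalize (X m))
        (Pi.single i (fderiv ℝ NormedSpace.normalize (X i) w)) := by
  have hnormalize : HasFDerivAt (fun (X : ι → E) m ↦ NormedSpace.normalize (X m))
      (ContinuousLinearMap.pi fun m ↦ (fderiv ℝ NormedSpace.normalize (X m)).comp
        (ContinuousLinearMap.proj m)) X :=
    hasFDerivAt_pi.2 fun m ↦ HasFDerivAt.comp (f := fun X : ι → E ↦ X m) X
      (hasFDerivAt_normalize (hX m)).differentiableAt.hasFDerivAt (hasFDerivAt_apply m X)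
  have hcomp : HasFDerivAt (normalizedAttention β) _ X :=
    (differentiable_attention β _).hasFDerivAt.comp X hnormalize
  rw [hcomp.fderiv, ContinuousLinearMap.comp_apply]
  congr 1
  ext1 m
  exact Pi.apply_single (fun m ↦ fderiv ℝ NormedSpace.normalize (X m)) (fun _ ↦ map_zero _) i w m

end Derivative

section Bounds

variable {β a r C : ℝ} {Y : ι → E}

lemma norm_attention_le (hY : ∀ m, ‖Y m‖ ≤ r) (k : ι) : ‖attention β Y k‖ ≤ r := by
  rw [attention_eq_sum_attentionWeight_smul]
  simpa using (convex_closedBall (0 : E) r).sum_mem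
    (fun m _ ↦ attentionWeight_nonneg β Y k m) (sum_attentionWeight β Y k)
    fun m _ ↦ by simpa using hY m

lemma norm_sq_smul_sub_attention_le (hY : ∀ m, ‖Y m‖ ≤ r) (c : ℝ) (k m : ι) :
    ‖c • (Y m - attention β Y k)‖ ^ 2 ≤ 4 * r ^ 2 * c ^ 2 :=
  calc ‖c • (Y m - attention β Y k)‖ ^ 2 = c ^ 2 * ‖Y m - attention β Y k‖ ^ 2 := by
        rw [norm_smul, mul_pow, Real.norm_eq_abs, sq_abs]
    _ ≤ c ^ 2 * (r + r) ^ 2 := by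
        gcongr
        exact norm_sub_le_of_le (hY m) (norm_attention_le hY k)
    _ = 4 * r ^ 2 * c ^ 2 := by ring

lemma norm_sq_sum_attentionWeight_smul_le (hY : ∀ m, ‖Y m‖ ≤ r) (c : ι → ℝ) (k : ι) :
    ‖∑ m, attentionWeight β Y k m • (c m • (Y m - attention β Y k))‖ ^ 2 ≤
      4 * r ^ 2 * ∑ m, attentionWeight β Y k m * c m ^ 2 :=
  calc _ ≤ ∑ m, attentionWeight β Y k m * ‖c m • (Y m - attention β Y k)‖ ^ 2 :=
        norm_sq_sum_smul_le (attentionWeight_nonneg β Y k) (sum_attentionWeight β Y k) _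
    _ ≤ ∑ m, attentionWeight β Y k m * (4 * r ^ 2 * c m ^ 2) := by
        gcongr with m
        exacts [attentionWeight_nonneg β Y k m, norm_sq_smul_sub_attention_le hY (c m) k m]
    _ = 4 * r ^ 2 * ∑ m, attentionWeight β Y k m * c m ^ 2 := by
        rw [Finset.mul_sum]
        exact Finset.sum_congr rfl fun m _ ↦ by ring

variable [DecidableEq ι]

lemma norm_sq_fderiv_attention_single_le (hY : ∀ m, ‖Y m‖ ≤ r) (i j : ι) (w : E) :
    ‖fderiv ℝ (attention β) Y (Pi.single i w) j‖ ^ 2 ≤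
      3 * (attentionWeight β Y j i ^ 2 * ‖w‖ ^ 2 +
        4 * r ^ 2 * β ^ 2 * (attentionWeight β Y j i ^ 2 * ⟪Y j, w⟫ ^ 2) +
        4 * r ^ 2 * β ^ 2 *
          ∑ m, attentionWeight β Y j m * ⟪Y m, (Pi.single i w : ι → E) j⟫ ^ 2) := by
  rw [fderiv_attention_single]
  refine (norm_sq_add₃_le _ _ _).trans ?_
  gcongr ?_ * (?_ + ?_ + ?_)
  · rw [norm_smul, mul_pow, Real.norm_eq_abs, sq_abs]
  · exact (norm_sq_smul_sub_attention_le hY _ j i).trans_eq (by ring)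
  · refine (norm_sq_sum_attentionWeight_smul_le hY _ j).trans_eq ?_
    simp only [real_inner_comm, mul_pow, mul_left_comm _ (β ^ 2), ← Finset.mul_sum]
    ring

variable {κ F : Type*} [Fintype κ] [NormedAddCommGroup F] [InnerProductSpace ℝ F]

lemma sum_sum_attentionWeight_mul_inner_single_sq_le (hY : ∀ m, ‖Y m‖ ≤ r)
    (b : OrthonormalBasis κ ℝ F) (L : F →L[ℝ] E) (i j : ι) :
    ∑ u, ∑ m, attentionWeight β Y j m * ⟪Y m, (Pi.single i (L (b u)) : ι → E) j⟫ ^ 2 ≤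
      r ^ 2 * ‖L‖ ^ 2 * (Pi.single i 1 : ι → ℝ) j := by
  rcases eq_or_ne j i with rfl | hij
  · simp only [Pi.single_eq_same, mul_one]
    rw [Finset.sum_comm]
    calc _ = ∑ m, attentionWeight β Y j m * ∑ u, ⟪Y m, L (b u)⟫ ^ 2 := by
          simp only [Finset.mul_sum]
      _ ≤ ∑ m, attentionWeight β Y j m * (r ^ 2 * ‖L‖ ^ 2) := by
          gcongr with m
          · exact attentionWeight_nonneg β Y j m
          · exact (sum_inner_apply_sq_le b L (Y m)).trans (by gcongr; exact hY m)
      _ = r ^ 2 * ‖L‖ ^ 2 := by rw [← Finset.sum_mul, sum_attentionWeight, one_mul]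
  · simp [Pi.single_eq_of_ne hij]

lemma sum_norm_sq_fderiv_attention_single_le (hY : ∀ m, ‖Y m‖ ≤ r) (b : OrthonormalBasis κ ℝ F)
    (L : F →L[ℝ] E) {i j : ι} (ha : attentionWeight β Y j i ≤ a) :
    ∑ u, ‖fderiv ℝ (attention β) Y (Pi.single i (L (b u))) j‖ ^ 2 ≤
      3 * ‖L‖ ^ 2 * (attentionWeight β Y j i * (a * Fintype.card κ + 4 * r ^ 4 * β ^ 2) +
        4 * r ^ 4 * β ^ 2 * (Pi.single i 1 : ι → ℝ) j) := by
  have hw := attentionWeight_nonneg β Y j i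
  have hsq_le : attentionWeight β Y j i ^ 2 ≤ a * attentionWeight β Y j i := by
    rw [sq]; gcongr
  have hsq_le_self : attentionWeight β Y j i ^ 2 ≤ attentionWeight β Y j i :=
    pow_le_of_le_one hw (softmax_le_one _ _) two_ne_zero
  have hinner : ∑ u, ⟪Y j, L (b u)⟫ ^ 2 ≤ r ^ 2 * ‖L‖ ^ 2 :=
    (sum_inner_apply_sq_le b L (Y j)).trans (by gcongr; exact hY j)
  have ha0 : 0 ≤ a := hw.trans ha
  calc _ ≤ ∑ u, 3 * (attentionWeight β Y j i ^ 2 * ‖L (b u)‖ ^ 2 +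
          4 * r ^ 2 * β ^ 2 * (attentionWeight β Y j i ^ 2 * ⟪Y j, L (b u)⟫ ^ 2) +
          4 * r ^ 2 * β ^ 2 *
            ∑ m, attentionWeight β Y j m * ⟪Y m, (Pi.single i (L (b u)) : ι → E) j⟫ ^ 2) :=
        Finset.sum_le_sum fun u _ ↦ norm_sq_fderiv_attention_single_le hY i j _
    _ = 3 * (attentionWeight β Y j i ^ 2 * ∑ u, ‖L (b u)‖ ^ 2 +
          4 * r ^ 2 * β ^ 2 * (attentionWeight β Y j i ^ 2 * ∑ u, ⟪Y j, L (b u)⟫ ^ 2) +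
          4 * r ^ 2 * β ^ 2 * ∑ u,
            ∑ m, attentionWeight β Y j m * ⟪Y m, (Pi.single i (L (b u)) : ι → E) j⟫ ^ 2) := by
        simp only [← Finset.mul_sum, Finset.sum_add_distrib]
    _ ≤ 3 * (a * attentionWeight β Y j i * (Fintype.card κ * ‖L‖ ^ 2) +
          4 * r ^ 2 * β ^ 2 * (attentionWeight β Y j i * (r ^ 2 * ‖L‖ ^ 2)) +
          4 * r ^ 2 * β ^ 2 * (r ^ 2 * ‖L‖ ^ 2 * (Pi.single i 1 : ι → ℝ) j)) := by
        gcongr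
        exacts [sum_norm_sq_apply_le b L, sum_sum_attentionWeight_mul_inner_single_sq_le hY b L i j]
    _ = _ := by ring

lemma sum_sum_norm_sq_fderiv_attention_single_le (hY : ∀ m, ‖Y m‖ ≤ r)
    (b : OrthonormalBasis κ ℝ F) {L : ι → F →L[ℝ] E} (hL : ∀ i, ‖L i‖ ^ 2 ≤ C) {j : ι}
    (ha : ∀ i, attentionWeight β Y j i ≤ a) :
    ∑ i, ∑ u, ‖fderiv ℝ (attention β) Y (Pi.single i (L i (b u))) j‖ ^ 2 ≤
      3 * C * (a * Fintype.card κ + 8 * r ^ 4 * β ^ 2) := by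
  have hw (i : ι) := attentionWeight_nonneg β Y j i
  have ha0 : 0 ≤ a := (hw j).trans (ha j)
  have hsingle (i : ι) : 0 ≤ (Pi.single i 1 : ι → ℝ) j :=
    Pi.single_nonneg (α := fun _ ↦ ℝ).2 zero_le_one j
  calc _ ≤ ∑ i, 3 * C * (attentionWeight β Y j i * (a * Fintype.card κ + 4 * r ^ 4 * β ^ 2) +
          4 * r ^ 4 * β ^ 2 * (Pi.single i 1 : ι → ℝ) j) := by
        gcongr with i
        refine (sum_norm_sq_fderiv_attention_single_le hY b (L i) (ha i)).trans ?_
        have := hw i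
        have := hsingle i
        gcongr
        exact hL i
    _ = 3 * C * ((∑ i, attentionWeight β Y j i) * (a * Fintype.card κ + 4 * r ^ 4 * β ^ 2) +
          4 * r ^ 4 * β ^ 2 * ∑ i, (Pi.single i 1 : ι → ℝ) j) := by
        simp only [← Finset.mul_sum, Finset.sum_add_distrib, Finset.sum_mul]
    _ = 3 * C * (a * Fintype.card κ + 8 * r ^ 4 * β ^ 2) := by
        rw [sum_attentionWeight, Finset.sum_pi_single, if_pos (Finset.mem_univ j)]
        ring

end Bounds

end Attention

section Frobenius

variable {ι κ : Type*} [Fintype ι] [Fintype κ] [DecidableEq ι] [DecidableEq κ]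

/-- The squared Frobenius norm of a linear map between families of vectors, that is, the sum of the
squares of all its matrix entries; for a Jacobian `∇_X X'` this is `‖∇_X X'‖_F ^ 2`. -/
noncomputable def frobeniusNormSq
    (T : (ι → EuclideanSpace ℝ κ) →L[ℝ] ι → EuclideanSpace ℝ κ) : ℝ :=
  ∑ i, ∑ u, ∑ j, ∑ v, T (Pi.single i (EuclideanSpace.single u 1)) j v ^ 2

lemma frobeniusNormSq_nonneg (T : (ι → EuclideanSpace ℝ κ) →L[ℝ] ι → EuclideanSpace ℝ κ) :
    0 ≤ frobeniusNormSq T := by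
  unfold frobeniusNormSq; positivity

lemma frobeniusNormSq_eq_sum_norm_sq
    (T : (ι → EuclideanSpace ℝ κ) →L[ℝ] ι → EuclideanSpace ℝ κ) :
    frobeniusNormSq T =
      ∑ j, ∑ i, ∑ u, ‖T (Pi.single i (EuclideanSpace.basisFun κ ℝ u)) j‖ ^ 2 := by
  simp only [frobeniusNormSq, EuclideanSpace.basisFun_apply, EuclideanSpace.real_norm_sq_eq]
  rw [Finset.sum_comm (s := (Finset.univ : Finset ι)) (t := (Finset.univ : Finset ι))]
  exact Finset.sum_congr rfl fun i _ ↦ Finset.sum_comm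

lemma frobeniusNormSq_fderiv_normalizedAttention_le [Nonempty ι] {β a q : ℝ} (hq : 0 < q)
    {X : ι → EuclideanSpace ℝ κ} (hX : ∀ i, q ≤ ‖X i‖ ^ 2)
    (ha : ∀ j i, attentionWeight β (fun m ↦ NormedSpace.normalize (X m)) j i ≤ a) :
    frobeniusNormSq (fderiv ℝ (normalizedAttention β) X) ≤
      Fintype.card ι * (3 * q⁻¹ * (a * Fintype.card κ + 8 * β ^ 2)) := by
  have hX0 (i : ι) : X i ≠ 0 := ne_zero_of_le_norm_sq hq (hX i)
  have hL (i : ι) : ‖fderiv ℝ NormedSpace.normalize (X i)‖ ^ 2 ≤ q⁻¹ :=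
    calc _ ≤ (‖X i‖⁻¹) ^ 2 := by gcongr; exact norm_fderiv_normalize_le (hX0 i)
      _ ≤ q⁻¹ := by rw [inv_pow]; gcongr; exact hX i
  have hrow (j : ι) := sum_sum_norm_sq_fderiv_attention_single_le
    (fun m ↦ (NormedSpace.norm_normalize (hX0 m)).le) (EuclideanSpace.basisFun κ ℝ) hL (ha j)
  simp only [frobeniusNormSq_eq_sum_norm_sq, fderiv_normalizedAttention_single β hX0]
  refine (Finset.sum_le_sum fun j _ ↦ hrow j).trans_eq ?_
  rw [Finset.sum_const, Finset.card_univ, nsmul_eq_mul, one_pow, mul_one]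

lemma frobeniusNormSq_fderiv_normalizedAttention_le_of_le_inner [Nontrivial ι] {ρ q : ℝ} (β : ℝ)
    (hq : 0 < q) {X : ι → EuclideanSpace ℝ κ} (hX : ∀ i, q ≤ ‖X i‖ ^ 2)
    (hcos : ∀ i j, i ≠ j → ρ ≤ ⟪NormedSpace.normalize (X i), NormedSpace.normalize (X j)⟫) :
    frobeniusNormSq (fderiv ℝ (normalizedAttention β) X) ≤
      Fintype.card ι * (3 * q⁻¹ *
        (Real.exp (|β| * (1 - ρ)) / Fintype.card ι * Fintype.card κ + 8 * β ^ 2)) := by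
  have hunit (i : ι) : ‖NormedSpace.normalize (X i)‖ = 1 :=
    NormedSpace.norm_normalize (ne_zero_of_le_norm_sq hq (hX i))
  exact frobeniusNormSq_fderiv_normalizedAttention_le hq hX fun j ↦
    attentionWeight_le_of_inner_mem_Icc β fun i ↦
      ⟨le_inner_of_pairwise_le_inner hunit hcos j i,
        real_inner_le_one_of_norm_eq_one (hunit j) (hunit i)⟩

end Frobenius

section Asymptotics

open Asymptotics Filter Topology

lemma tendsto_natCast_add_two_atTop : Tendsto (fun n : ℕ ↦ (n : ℝ) + 2) atTop atTop :=
  tendsto_atTop_add_const_right _ _ tendsto_natCast_atTop_atTop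

lemma tendsto_exp_mul_log_div_nhds_zero {c : ℝ} (hc : c < 1) :
    Tendsto (fun t : ℝ ↦ Real.exp (c * Real.log t) / t) atTop (𝓝 0) := by
  refine (tendsto_rpow_neg_atTop (sub_pos.2 hc)).congr' ?_
  filter_upwards [eventually_gt_atTop 0] with t ht
  rw [neg_sub, Real.rpow_sub ht, Real.rpow_one, Real.rpow_def_of_pos ht, mul_comm c]

lemma isLittleO_log_sq_of_add_two_le {d : ℕ → ℕ} (hd : ∀ n, n + 2 ≤ d n) :
    (fun n : ℕ ↦ Real.log (n + 2) ^ 2) =o[atTop] fun n ↦ (d n : ℝ) := by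
  refine (Real.isLittleO_pow_log_id_atTop.comp_tendsto tendsto_natCast_add_two_atTop).trans_le
    fun n ↦ ?_
  rw [Function.comp_apply, id, Real.norm_of_nonneg (by positivity), Real.norm_natCast]
  exact_mod_cast hd n

theorem stmt18_general {ρ q γ : ℝ} (hq : 0 < q) (hγ : |γ| * (1 - ρ) < 1) {d : ℕ → ℕ}
    (hd : (fun n : ℕ ↦ Real.log (n + 2) ^ 2) =o[atTop] fun n ↦ (d n : ℝ))
    {x : (n : ℕ) → Fin (n + 2) → EuclideanSpace ℝ (Fin (d n))}
    (hnorm : ∀ n i, q ≤ ‖x n i‖ ^ 2)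
    (hcos : ∀ n i j, i ≠ j →
      ρ ≤ ⟪NormedSpace.normalize (x n i), NormedSpace.normalize (x n j)⟫) :
    Tendsto (fun n : ℕ ↦ frobeniusNormSq
      (fderiv ℝ (normalizedAttention (γ * Real.log (n + 2))) (x n)) / (((n : ℝ) + 2) * d n))
      atTop (𝓝 0) := by
  have hlim : Tendsto (fun n : ℕ ↦ 3 * q⁻¹ *
      (Real.exp (|γ| * (1 - ρ) * Real.log (n + 2)) / ((n : ℝ) + 2) +
        8 * γ ^ 2 * (Real.log (n + 2) ^ 2 / d n))) atTop (𝓝 0) := by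
    simpa using (((tendsto_exp_mul_log_div_nhds_zero hγ).comp tendsto_natCast_add_two_atTop).add
      (hd.tendsto_div_nhds_zero.const_mul (8 * γ ^ 2))).const_mul (3 * q⁻¹)
  refine squeeze_zero (fun n ↦ div_nonneg (frobeniusNormSq_nonneg _) (by positivity))
    (fun n ↦ ?_) hlim
  have hdim : (0 : ℝ) < d n := by
    have := nontrivial_of_ne _ _ (ne_zero_of_le_norm_sq hq (hnorm n 0))
    simpa using Module.finrank_pos (R := ℝ) (M := EuclideanSpace ℝ (Fin (d n)))
  have hlog : 0 ≤ Real.log ((n : ℝ) + 2) := Real.log_nonneg (by linarith [n.cast_nonneg (α := ℝ)])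
  have hfrob := frobeniusNormSq_fderiv_normalizedAttention_le_of_le_inner
    (γ * Real.log (n + 2)) hq (hnorm n) (hcos n)
  rw [abs_mul, abs_of_nonneg hlog, mul_right_comm |γ|, Fintype.card_fin, Fintype.card_fin,
    Nat.cast_add, Nat.cast_two] at hfrob
  rw [div_le_iff₀ (by positivity)]
  refine hfrob.trans_eq ?_
  field_simp

end Asymptotics

theorem stmt18 (ρ q γ : ℝ) (hρ : ρ ∈ Set.Ioo (0:ℝ) 1) (hq : 0 < q)
    (hγ0 : 0 < γ) (hγ : γ < 1 / (1 - ρ))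
    (d : ℕ → ℕ) (hd : ∀ n, n + 2 ≤ d n)
    (x : (n : ℕ) → Fin (n + 2) → EuclideanSpace ℝ (Fin (d n)))
    (hnorm : ∀ n i, ‖x n i‖ ^ 2 = q)
    (hcos : ∀ n, ∀ i j : Fin (n + 2), i ≠ j →
      ⟪(‖x n i‖⁻¹ • x n i : EuclideanSpace ℝ (Fin (d n))), ‖x n j‖⁻¹ • x n j⟫ = ρ) :
    Filter.Tendsto (fun n : ℕ =>
      let β : ℝ := γ * Real.log (n + 2)
      let F : (Fin (n + 2) → EuclideanSpace ℝ (Fin (d n))) →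
          (Fin (n + 2) → EuclideanSpace ℝ (Fin (d n))) := fun X k =>
        (∑ l, Real.exp (β * ⟪(‖X k‖⁻¹ • X k : EuclideanSpace ℝ (Fin (d n))),
            ‖X l‖⁻¹ • X l⟫))⁻¹ •
          ∑ m, Real.exp (β * ⟪(‖X k‖⁻¹ • X k : EuclideanSpace ℝ (Fin (d n))),
            ‖X m‖⁻¹ • X m⟫) • (‖X m‖⁻¹ • X m)
      (∑ i : Fin (n + 2), ∑ u : Fin (d n), ∑ j : Fin (n + 2), ∑ v : Fin (d n),
        (fderiv ℝ F (x n) (Pi.single i (EuclideanSpace.single u 1)) j v) ^ 2) /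
          (((n : ℝ) + 2) * (d n)))
      Filter.atTop (nhds 0) := by
  exact stmt18_general hq (by rwa [abs_of_pos hγ0, ← lt_div_iff₀ (sub_pos.2 hρ.2)])
    (isLittleO_log_sq_of_add_two_le hd) (fun n i ↦ (hnorm n i).ge)
    fun n i j hij ↦ (hcos n i j hij).ge
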